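/- Let k₁ ≥ k₂ ≥ … ≥ k_i > 0 be positive reals, let γ > 0, and let Z₁, …, Z_i be independent geometric random variables with mean 2 (Pr{Z_j = k} = 2^{−k} for k = 1, 2, …). Then for every t > 0, Pr{ Σ_{j=1}^{i} (γ/k_j)·Z_j ≥ t } ≤ exp( −t·k_i/(3γ) + Σ_{j=1}^{i} k_i/k_j ). -/

import Mathlib

open MeasureTheory ProbabilityTheory

/-!
Apply the exponential Markov inequality with parameter `β = κ / (3γ)`, where `κ` is a lower
bound for the `k j`. The choice makes `α = β γ / k j` at most `1 / 3`, where the moment generating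
function `exp α / (2 - exp α)` of a geometric variable with mean `2` is at most `exp (3α)`: with
`x = exp α` this is `1 ≤ x² (2 - x)`, true for `x` between `1` and the golden ratio `φ`, because
`x² (2 - x) - 1 = (x - 1) (φ - x) (x - ψ)` with `ψ < 0` the conjugate of `φ`. Finally
`exp (1 / 3) ≤ φ`, as `exp 1 < 3 < 2φ + 1 = φ³`.
-/

section ExpBound

lemma one_le_sq_mul_two_sub {x : ℝ} (hone : 1 ≤ x) (hx : x ≤ Real.goldenRatio) :
    1 ≤ x ^ 2 * (2 - x) := by
  have hconj : Real.goldenConj ≤ x := by linarith [Real.goldenConj_neg]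
  have hfactor : x ^ 2 * (2 - x) - 1
      = (x - 1) * ((Real.goldenRatio - x) * (x - Real.goldenConj)) := by
    linear_combination (x - 1) * Real.goldenRatio_mul_goldenConj
      - (x - 1) * x * Real.goldenRatio_add_goldenConj
  rw [← sub_nonneg, hfactor]
  exact mul_nonneg (sub_nonneg.2 hone) (mul_nonneg (sub_nonneg.2 hx) (sub_nonneg.2 hconj))

lemma exp_div_two_sub_exp_le {a : ℝ} (hnonneg : 0 ≤ a) (ha : Real.exp a ≤ Real.goldenRatio) :
    Real.exp a / (2 - Real.exp a) ≤ Real.exp (3 * a) := by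
  have hlt : Real.exp a < 2 := ha.trans_lt Real.goldenRatio_lt_two
  rw [div_le_iff₀ (sub_pos.2 hlt)]
  calc
    Real.exp a ≤ Real.exp a * (Real.exp a ^ 2 * (2 - Real.exp a)) :=
      le_mul_of_one_le_right (Real.exp_nonneg a)
        (one_le_sq_mul_two_sub (Real.one_le_exp hnonneg) ha)
    _ = Real.exp (3 * a) * (2 - Real.exp a) := by
      rw [show Real.exp (3 * a) = Real.exp a ^ 3 from mod_cast Real.exp_nat_mul a 3]
      ring

lemma exp_one_third_le_goldenRatio : Real.exp (1 / 3) ≤ Real.goldenRatio := by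
  have hcube : Real.goldenRatio ^ 3 = 2 * Real.goldenRatio + 1 := by
    linear_combination (Real.goldenRatio + 1) * Real.goldenRatio_sq
  refine le_of_pow_le_pow_left₀ three_ne_zero Real.goldenRatio_pos.le ?_
  calc
    Real.exp (1 / 3) ^ 3 = Real.exp 1 := by rw [← Real.exp_nat_mul]; norm_num
    _ ≤ 3 := Real.exp_one_lt_three.le
    _ ≤ Real.goldenRatio ^ 3 := by linarith [Real.one_lt_goldenRatio]

end ExpBound

section GeometricMeasure

variable {p : unitInterval} {a : ℝ}

lemma hasSum_geometric_mul_exp (ha : (1 - p) * Real.exp a < 1) :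
    HasSum (fun n : ℕ ↦ (1 - p : ℝ) ^ n * p * Real.exp (a * n))
      (p / (1 - (1 - p) * Real.exp a)) := by
  have hnonneg : 0 ≤ (1 - p) * Real.exp a :=
    mul_nonneg (sub_nonneg.2 p.2.2) (Real.exp_nonneg a)
  rw [div_eq_mul_inv]
  convert! (hasSum_geometric_of_lt_one hnonneg ha).mul_left (p : ℝ) using 2 with n
  rw [mul_comm a, Real.exp_nat_mul, mul_pow]
  ring

lemma integrable_exp_mul_geometricMeasure (hp : p ≠ 0) (ha : (1 - p) * Real.exp a < 1) :
    Integrable (fun n : ℕ ↦ Real.exp (a * n)) (geometricMeasure p) := by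
  rw [integrable_geometricMeasure_iff hp]
  simpa only [Real.norm_eq_abs, Real.abs_exp] using (hasSum_geometric_mul_exp ha).summable

lemma mgf_geometricMeasure (hp : p ≠ 0) (ha : (1 - p) * Real.exp a < 1) :
    mgf (fun n : ℕ ↦ (n : ℝ)) (geometricMeasure p) a = p / (1 - (1 - p) * Real.exp a) := by
  rw [mgf, integral_geometricMeasure hp]
  exact (hasSum_geometric_mul_exp ha).tsum_eq

/-- The geometric law on `{1, 2, …}`, the number of trials up to and including the first success.
Mathlib's `geometricMeasure` counts the failures before it, whence the shift by one. -/
noncomputable def shiftedGeometricMeasure (p : unitInterval) : Measure ℕ :=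
  (geometricMeasure p).map (· + 1)

lemma shiftedGeometricMeasure_singleton_zero (p : unitInterval) :
    shiftedGeometricMeasure p {0} = 0 := by
  rw [shiftedGeometricMeasure, Measure.map_apply .of_discrete .of_discrete,
    Set.preimage_singleton_eq_empty.2 (by simp), measure_empty]

lemma shiftedGeometricMeasure_singleton_succ (hp : p ≠ 0) (n : ℕ) :
    shiftedGeometricMeasure p {n + 1} = ENNReal.ofReal ((1 - p) ^ n * p) := by
  rw [shiftedGeometricMeasure, Measure.map_apply .of_discrete .of_discrete,
    ← geometricMeasure_singleton hp]
  congr 1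
  ext m
  simp

variable {Ω : Type*} [MeasurableSpace Ω] {μ : Measure Ω} {Z : Ω → ℕ}

lemma integrable_exp_mul_of_hasLaw_shiftedGeometricMeasure (hp : p ≠ 0)
    (ha : (1 - p) * Real.exp a < 1) (hZ : HasLaw Z (shiftedGeometricMeasure p) μ) :
    Integrable (fun ω ↦ Real.exp (a * Z ω)) μ := by
  have hshift : Integrable (fun n : ℕ ↦ Real.exp (a * n)) (shiftedGeometricMeasure p) := by
    rw [shiftedGeometricMeasure, integrable_map_measure .of_discrete .of_discrete]
    convert! (integrable_exp_mul_geometricMeasure hp ha).const_mul (Real.exp a) using 2 with n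
    rw [← Real.exp_add, Function.comp_apply, Nat.cast_succ]
    ring_nf
  rw [← hZ.map_eq] at hshift
  exact hshift.comp_aemeasurable hZ.aemeasurable

lemma mgf_of_hasLaw_shiftedGeometricMeasure (hp : p ≠ 0) (ha : (1 - p) * Real.exp a < 1)
    (hZ : HasLaw Z (shiftedGeometricMeasure p) μ) :
    mgf (fun ω ↦ (Z ω : ℝ)) μ a = p * Real.exp a / (1 - (1 - p) * Real.exp a) := by
  calc
    mgf (fun ω ↦ (Z ω : ℝ)) μ a
      = mgf (fun n : ℕ ↦ (n : ℝ)) (shiftedGeometricMeasure p) a := by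
        rw [← hZ.map_eq, mgf_map hZ.aemeasurable .of_discrete]; rfl
    _ = mgf (fun n : ℕ ↦ (n : ℝ) + 1) (geometricMeasure p) a := by
        rw [shiftedGeometricMeasure, mgf_map .of_discrete .of_discrete]
        simp only [Function.comp_def, Nat.cast_succ]
    _ = p * Real.exp a / (1 - (1 - p) * Real.exp a) := by
        rw [mgf_add_const, mgf_geometricMeasure hp ha, mul_one, div_mul_eq_mul_div]

end GeometricMeasure

section FairCoin

variable {Ω : Type*} [MeasurableSpace Ω] {μ : Measure Ω} {Z : Ω → ℕ} {a : ℝ}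

/-- The success probability of a fair coin, as an element of the unit interval that
`geometricMeasure` expects. -/
noncomputable def fairProb : unitInterval := ⟨1 / 2, by norm_num, by norm_num⟩

lemma coe_fairProb : (fairProb : ℝ) = 1 / 2 := rfl

lemma fairProb_ne_zero : fairProb ≠ 0 := by
  rw [Ne, Subtype.ext_iff]; norm_num [coe_fairProb]

lemma one_sub_fairProb_mul_exp_lt_one (ha : Real.exp a < 2) :
    (1 - fairProb) * Real.exp a < 1 := by
  rw [coe_fairProb]; linarith

lemma hasLaw_shiftedGeometricMeasure_fairProb (hZ : AEMeasurable Z μ)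
    (hgeom : ∀ s : ℕ, μ {ω | Z ω = s} = if 1 ≤ s then (2 : ENNReal)⁻¹ ^ s else 0) :
    HasLaw Z (shiftedGeometricMeasure fairProb) μ where
  map_eq := by
    have hinv : (2 : ENNReal)⁻¹ = ENNReal.ofReal (1 / 2) := by
      rw [one_div, ENNReal.ofReal_inv_of_pos two_pos, ENNReal.ofReal_ofNat]
    refine Measure.ext_of_singleton fun s ↦ ?_
    rw [Measure.map_apply_of_aemeasurable hZ .of_discrete]
    refine (hgeom s).trans ?_
    cases s with
    | zero => simp [shiftedGeometricMeasure_singleton_zero]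
    | succ n =>
      rw [if_pos (Nat.le_add_left 1 n),
        shiftedGeometricMeasure_singleton_succ fairProb_ne_zero, hinv,
        ← ENNReal.ofReal_pow (by norm_num), coe_fairProb, sub_half, pow_succ]

lemma mgf_le_exp_three_mul_of_hasLaw_fairProb (hnonneg : 0 ≤ a) (ha : Real.exp a ≤ Real.goldenRatio)
    (hZ : HasLaw Z (shiftedGeometricMeasure fairProb) μ) :
    mgf (fun ω ↦ (Z ω : ℝ)) μ a ≤ Real.exp (3 * a) := by
  have hlt : Real.exp a < 2 := ha.trans_lt Real.goldenRatio_lt_two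
  have hmgf : mgf (fun ω ↦ (Z ω : ℝ)) μ a = Real.exp a / (2 - Real.exp a) := by
    rw [mgf_of_hasLaw_shiftedGeometricMeasure fairProb_ne_zero
      (one_sub_fairProb_mul_exp_lt_one hlt) hZ, coe_fairProb,
      ← mul_div_mul_left (Real.exp a) _ (one_half_pos.ne' : (1 / 2 : ℝ) ≠ 0)]
    ring_nf
  rw [hmgf]
  exact exp_div_two_sub_exp_le hnonneg ha

end FairCoin

section Tail

variable {Ω ι : Type*} [MeasurableSpace Ω] {μ : Measure Ω}

lemma measure_sum_ge_le_exp_of_mgf_le {X : ι → Ω → ℝ} {b : ι → ℝ} {β : ℝ} {s : Finset ι}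
    (hindep : iIndepFun X μ) (hmeas : ∀ j, Measurable (X j)) (hβ : 0 ≤ β)
    (hint : ∀ j ∈ s, Integrable (fun ω ↦ Real.exp (β * X j ω)) μ)
    (hmgf : ∀ j ∈ s, mgf (X j) μ β ≤ Real.exp (b j)) (t : ℝ) :
    μ.real {ω | t ≤ ∑ j ∈ s, X j ω} ≤ Real.exp (-β * t + ∑ j ∈ s, b j) := by
  have := hindep.isProbabilityMeasure
  calc
    μ.real {ω | t ≤ ∑ j ∈ s, X j ω}
      ≤ Real.exp (-β * t) * mgf (∑ j ∈ s, X j) μ β := by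
        simpa only [Finset.sum_apply] using
          measure_ge_le_exp_mul_mgf t hβ (hindep.integrable_exp_mul_sum hmeas hint)
    _ = Real.exp (-β * t) * ∏ j ∈ s, mgf (X j) μ β := by rw [hindep.mgf_sum hmeas]
    _ ≤ Real.exp (-β * t) * ∏ j ∈ s, Real.exp (b j) :=
        mul_le_mul_of_nonneg_left (Finset.prod_le_prod (fun _ _ ↦ mgf_nonneg) hmgf)
          (Real.exp_nonneg _)
    _ = Real.exp (-β * t + ∑ j ∈ s, b j) := by rw [Real.exp_add, Real.exp_sum]

lemma measure_sum_mul_ge_le_exp_of_hasLaw_fairProb {Z : ι → Ω → ℕ} {c : ι → ℝ} {β : ℝ}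
    {s : Finset ι} (hindep : iIndepFun Z μ) (hmeas : ∀ j, Measurable (Z j))
    (hlaw : ∀ j ∈ s, HasLaw (Z j) (shiftedGeometricMeasure fairProb) μ) (hβ : 0 ≤ β)
    (hnonneg : ∀ j ∈ s, 0 ≤ β * c j)
    (hexp : ∀ j ∈ s, Real.exp (β * c j) ≤ Real.goldenRatio) (t : ℝ) :
    μ.real {ω | t ≤ ∑ j ∈ s, c j * (Z j ω : ℝ)}
      ≤ Real.exp (-β * t + ∑ j ∈ s, 3 * (β * c j)) := by
  have hindep_mul : iIndepFun (fun j ω ↦ c j * (Z j ω : ℝ)) μ :=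
    hindep.comp (fun j (n : ℕ) ↦ c j * (n : ℝ)) fun _ ↦ .of_discrete
  refine measure_sum_ge_le_exp_of_mgf_le hindep_mul (fun j ↦ by fun_prop) hβ
    (fun j hj ↦ ?_) (fun j hj ↦ ?_) t
  · simpa only [mul_assoc] using integrable_exp_mul_of_hasLaw_shiftedGeometricMeasure
      fairProb_ne_zero (one_sub_fairProb_mul_exp_lt_one
        ((hexp j hj).trans_lt Real.goldenRatio_lt_two)) (hlaw j hj)
  · rw [mgf_const_mul, mul_comm (c j)]
    exact mgf_le_exp_three_mul_of_hasLaw_fairProb (hnonneg j hj) (hexp j hj) (hlaw j hj)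

theorem geometric_weighted_sum_tail_general [Fintype ι] {Z : ι → Ω → ℕ} {k : ι → ℝ} {κ γ : ℝ}
    (hmeas : ∀ j, Measurable (Z j)) (hindep : iIndepFun Z μ)
    (hgeom : ∀ (j : ι) (s : ℕ),
      μ {ω | Z j ω = s} = if 1 ≤ s then (2 : ENNReal)⁻¹ ^ s else 0)
    (hκ : 0 < κ) (hk : ∀ j, κ ≤ k j) (hγ : 0 < γ) (t : ℝ) :
    μ {ω | t ≤ ∑ j, γ / k j * (Z j ω : ℝ)} ≤
      ENNReal.ofReal (Real.exp (-(t * κ) / (3 * γ) + ∑ j, κ / k j)) := by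
  have := hindep.isProbabilityMeasure
  have hkpos (j : ι) : 0 < k j := hκ.trans_le (hk j)
  have hβ : 0 ≤ κ / (3 * γ) := by positivity
  have hrate (j : ι) : κ / (3 * γ) * (γ / k j) = κ / k j / 3 := by field_simp
  have hlaw (j : ι) : HasLaw (Z j) (shiftedGeometricMeasure fairProb) μ :=
    hasLaw_shiftedGeometricMeasure_fairProb (hmeas j).aemeasurable (hgeom j)
  have hexp (j : ι) : Real.exp (κ / (3 * γ) * (γ / k j)) ≤ Real.goldenRatio := by
    refine (Real.exp_le_exp.2 ?_).trans exp_one_third_le_goldenRatio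
    rw [hrate]
    gcongr
    exact div_le_one_of_le₀ (hk j) (hkpos j).le
  have htail := measure_sum_mul_ge_le_exp_of_hasLaw_fairProb (s := Finset.univ) hindep hmeas
    (fun j _ ↦ hlaw j) hβ (fun j _ ↦ mul_nonneg hβ (div_nonneg hγ.le (hkpos j).le))
    (fun j _ ↦ hexp j) t
  rw [← ofReal_measureReal]
  refine ENNReal.ofReal_le_ofReal (htail.trans_eq ?_)
  simp only [hrate, mul_div_cancel₀ _ (three_ne_zero' ℝ)]
  ring_nf

end Tail

/-- If `Z₁,…,Z_i` are i.i.d. geometric random variables with mean 2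
(`Pr(Z = k) = 2⁻ᵏ` for `k ≥ 1`) and `k₁ ≥ k₂ ≥ … ≥ k_i > 0`, then for every `t > 0`,
`Pr(∑_j (γ/k_j) Z_j ≥ t) ≤ exp(-t k_i/(3γ) + ∑_j k_i/k_j)`. -/
theorem geometric_weighted_sum_tail
    (Ω : Type) [MeasurableSpace Ω] (μ : Measure Ω) [IsProbabilityMeasure μ]
    (i : ℕ) (hi : 0 < i) (Z : Fin i → Ω → ℕ) (k : Fin i → ℝ) (γ t : ℝ)
    (hmeas : ∀ j, Measurable (Z j))
    (hindep : iIndepFun Z μ)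
    (hgeom : ∀ (j : Fin i) (s : ℕ),
      μ {ω | Z j ω = s} = if 1 ≤ s then (2 : ENNReal)⁻¹ ^ s else 0)
    (hk : Antitone k) (hkpos : ∀ j, 0 < k j) (hγ : 0 < γ) (ht : 0 < t) :
    μ {ω | t ≤ ∑ j, γ / k j * (Z j ω : ℝ)} ≤
      ENNReal.ofReal
        (Real.exp (-(t * k ⟨i - 1, by omega⟩) / (3 * γ) +
          ∑ j, k ⟨i - 1, by omega⟩ / k j)) :=
  geometric_weighted_sum_tail_general hmeas hindep hgeom (hkpos _)
    (fun j ↦ hk (Fin.le_def.2 (Nat.le_sub_one_of_lt j.isLt))) hγ t
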